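/- Let N and L be positive integers, let c > 0, and for each i ∈ {1, …, L} let b_i > 0 and Ξ(i, 1) ∈ ℝ. Define f : [c, ∞) → ℝ by f(y) = Σ_{i=1}^{L} Ξ(i, 1) exp(−(y−c)/b_i)/b_i, and assume ∫_c^∞ f(y) dy = 1. Then for every x > 0, ∫_c^∞ [γ(N, N x/(2y))/(N−1)!] f(y) dy = 1 − Σ_{n=0}^{N−1} Σ_{i=1}^{L} [Ξ(i, 1)/(n! b_i^{n})] (N x/2)^n e^{c/b_i} Γ(−n+1, c/b_i; N x/(2 b_i)), where γ(s, t) = ∫₀^t u^{s−1} e^{−u} du is the lower incomplete Gamma function and Γ(s, x; B) := ∫_x^∞ t^{s−1} exp(−t − B/t) dt is the extended incomplete Gamma function. -/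

import Mathlib

open MeasureTheory

/-- The extended incomplete Gamma function
`Γ(s, x; B) = ∫ₓ^∞ t ^ (s - 1) exp (-t - B/t) dt`. -/
noncomputable def extGamma (s x B : ℝ) : ℝ :=
  ∫ t in Set.Ioi x, t ^ (s - 1) * Real.exp (-t - B / t)

/-- The lower incomplete Gamma function at a positive integer shape,
`γ(N, t) = ∫₀ᵗ u ^ (N - 1) exp (-u) du`. -/
noncomputable def lowGamma (N : ℕ) (t : ℝ) : ℝ :=
  ∫ u in (0:ℝ)..t, u ^ (N - 1) * Real.exp (-u)

/-!
At an integer shape `N`, the regularized lower incomplete Gamma function is a Poisson tail,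
`γ(N, t) / (N - 1)! = 1 - ∑_{n < N} tⁿ e⁻ᵗ / n!`: the derivatives of the Poisson weights telescope.
Put `t = a / y` and integrate against the density of `y`. The constant `1` gives the total mass.
The exponential with scale `b` turns the `n`-th Poisson weight, after `y = b t`, into
`∫ t⁻ⁿ exp (-t - (a / b) / t) dt` over `t > c / b`, which is an extended incomplete Gamma function.
-/

open scoped Nat

/-- The probability `tⁿ e⁻ᵗ / n!` that a Poisson variable of rate `t` equals `n`, as a function of
a real `t` so that it can be differentiated; it is a probability only for `0 ≤ t`. -/
noncomputable def poissonWeight (n : ℕ) (t : ℝ) : ℝ :=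
  t ^ n / n ! * Real.exp (-t)

lemma poissonWeight_nonneg (n : ℕ) {t : ℝ} (ht : 0 ≤ t) : 0 ≤ poissonWeight n t := by
  unfold poissonWeight
  positivity

lemma poissonWeight_le_one (n : ℕ) {t : ℝ} (ht : 0 ≤ t) : poissonWeight n t ≤ 1 :=
  calc t ^ n / n ! * Real.exp (-t) ≤ Real.exp t * Real.exp (-t) := by
        gcongr
        exact Real.pow_div_factorial_le_exp t ht n
    _ = 1 := by rw [← Real.exp_add, add_neg_cancel, Real.exp_zero]

lemma continuous_poissonWeight (n : ℕ) : Continuous (poissonWeight n) := by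
  unfold poissonWeight
  fun_prop

lemma sum_poissonWeight_zero (N : ℕ) :
    ∑ n ∈ Finset.range (N + 1), poissonWeight n 0 = 1 := by
  simp [Finset.sum_range_succ', poissonWeight]

lemma hasDerivAt_poissonWeight_zero (t : ℝ) :
    HasDerivAt (poissonWeight 0) (-poissonWeight 0 t) t := by
  have h : poissonWeight 0 = fun s => Real.exp (-s) := by
    ext s
    simp [poissonWeight]
  simpa [h] using (hasDerivAt_neg t).exp

lemma hasDerivAt_poissonWeight_succ (n : ℕ) (t : ℝ) :
    HasDerivAt (poissonWeight (n + 1)) (poissonWeight n t - poissonWeight (n + 1) t) t := by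
  have h := ((hasDerivAt_pow (n + 1) t).div_const ((n + 1)! : ℝ)).mul (hasDerivAt_neg t).exp
  refine h.congr_deriv ?_
  simp only [poissonWeight, Nat.factorial_succ, Nat.add_sub_cancel]
  push_cast
  field_simp
  ring

lemma hasDerivAt_sum_poissonWeight (N : ℕ) (t : ℝ) :
    HasDerivAt (fun s => ∑ n ∈ Finset.range (N + 1), poissonWeight n s) (-poissonWeight N t) t := by
  induction N with
  | zero => simpa using hasDerivAt_poissonWeight_zero t
  | succ N ih =>
    simp_rw [Finset.sum_range_succ _ (N + 1)]
    exact (ih.fun_add (hasDerivAt_poissonWeight_succ N t)).congr_deriv (by ring)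

lemma integral_poissonWeight (N : ℕ) (t : ℝ) :
    ∫ s in (0 : ℝ)..t, poissonWeight N s = 1 - ∑ n ∈ Finset.range (N + 1), poissonWeight n t := by
  rw [intervalIntegral.integral_eq_sub_of_hasDerivAt
    (fun s _ => (hasDerivAt_sum_poissonWeight N s).fun_neg.congr_deriv (neg_neg _))
    ((continuous_poissonWeight N).intervalIntegrable _ _), sum_poissonWeight_zero]
  ring

lemma lowGamma_div_factorial {N : ℕ} (hN : 0 < N) (t : ℝ) :
    lowGamma N t / (N - 1)! = 1 - ∑ n ∈ Finset.range N, poissonWeight n t := by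
  obtain ⟨M, rfl⟩ := Nat.exists_eq_succ_of_ne_zero hN.ne'
  rw [Nat.succ_eq_add_one, ← integral_poissonWeight]
  simp only [lowGamma, Nat.add_sub_cancel, ← intervalIntegral.integral_div, poissonWeight,
    div_mul_eq_mul_div]

section Mixing

variable {α : Type*} [MeasurableSpace α] {μ : Measure α} {f g : α → ℝ}

lemma integrable_poissonWeight_mul (n : ℕ) (hf : Integrable f μ) (hg : AEMeasurable g μ)
    (hg₀ : 0 ≤ᵐ[μ] g) : Integrable (fun y => poissonWeight n (g y) * f y) μ := by
  refine hf.bdd_mul (c := 1)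
    ((continuous_poissonWeight n).measurable.comp_aemeasurable hg).aestronglyMeasurable ?_
  filter_upwards [hg₀] with y hy
  rw [Real.norm_of_nonneg (poissonWeight_nonneg n hy)]
  exact poissonWeight_le_one n hy

lemma integral_lowGamma_div_factorial_mul {N : ℕ} (hN : 0 < N) (hf : Integrable f μ)
    (hg : AEMeasurable g μ) (hg₀ : 0 ≤ᵐ[μ] g) :
    ∫ y, lowGamma N (g y) / (N - 1)! * f y ∂μ
      = ∫ y, f y ∂μ - ∑ n ∈ Finset.range N, ∫ y, poissonWeight n (g y) * f y ∂μ := by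
  have hint : ∀ n ∈ Finset.range N, Integrable (fun y => poissonWeight n (g y) * f y) μ :=
    fun n _ => integrable_poissonWeight_mul n hf hg hg₀
  simp_rw [lowGamma_div_factorial hN, sub_mul, one_mul, Finset.sum_mul]
  rw [integral_sub hf (integrable_finsetSum _ hint), integral_finsetSum _ hint]

end Mixing

lemma integrableOn_exp_neg_sub_div_Ioi (c d : ℝ) {b : ℝ} (hb : 0 < b) :
    IntegrableOn (fun y => Real.exp (-(y - c) / b)) (Set.Ioi d) := by
  have factor : (fun y => Real.exp (-(y - c) / b))
      = fun y => Real.exp (c / b) * Real.exp (-b⁻¹ * y) := by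
    ext y
    rw [← Real.exp_add]
    congr 1
    ring
  rw [factor]
  exact (exp_neg_integrableOn_Ioi d (inv_pos.2 hb)).const_mul _

lemma integral_poissonWeight_mul_exp {b c : ℝ} (hb : 0 < b) (hc : 0 ≤ c) (a : ℝ) (n : ℕ) :
    ∫ y in Set.Ioi c, poissonWeight n (a / y) * (Real.exp (-(y - c) / b) / b)
      = a ^ n / (n ! * b ^ n) * Real.exp (c / b) * extGamma (-(n : ℝ) + 1) (c / b) (a / b) := by
  have substitution := integral_comp_mul_left_Ioi
    (fun y => poissonWeight n (a / y) * Real.exp (-(y - c) / b)) (c / b) hb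
  rw [mul_div_cancel₀ _ hb.ne', smul_eq_mul] at substitution
  simp_rw [← mul_div_assoc]
  rw [integral_div, div_eq_inv_mul, ← substitution, extGamma, ← integral_const_mul]
  refine setIntegral_congr_fun measurableSet_Ioi fun t ht => ?_
  have ht₀ : 0 < t := (div_nonneg hc hb.le).trans_lt ht
  have exponent : -(a / (b * t)) + -(b * t - c) / b = c / b + (-t - a / b / t) := by
    field_simp
    ring
  have power : t ^ (-(n : ℝ) + 1 - 1) = (t ^ n)⁻¹ := by
    rw [add_sub_cancel_right, Real.rpow_neg ht₀.le, Real.rpow_natCast]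
  simp only [poissonWeight]
  rw [power, mul_assoc, ← Real.exp_add, exponent, Real.exp_add, div_pow, mul_pow]
  field_simp

section ExponentialMixture

variable {ι : Type*} [Fintype ι] {a c : ℝ} {b : ι → ℝ} {Ξ : ι → ℝ} {f : ℝ → ℝ}

lemma integrableOn_expMixture (hb : ∀ i, 0 < b i)
    (hf : ∀ y ∈ Set.Ioi c, f y = ∑ i, Ξ i * Real.exp (-(y - c) / b i) / b i) :
    IntegrableOn f (Set.Ioi c) := by
  refine IntegrableOn.congr_fun ?_ (fun y hy => (hf y hy).symm) measurableSet_Ioi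
  exact integrable_finsetSum _ fun i _ =>
    ((integrableOn_exp_neg_sub_div_Ioi c c (hb i)).const_mul (Ξ i)).div_const (b i)

lemma ae_restrict_Ioi_div_nonneg (ha : 0 ≤ a) (hc : 0 ≤ c) :
    0 ≤ᵐ[volume.restrict (Set.Ioi c)] fun y => a / y :=
  ae_restrict_of_forall_mem measurableSet_Ioi fun _ hy => div_nonneg ha (hc.trans (le_of_lt hy))

lemma integral_poissonWeight_mul_expMixture (ha : 0 ≤ a) (hc : 0 ≤ c) (hb : ∀ i, 0 < b i)
    (hf : ∀ y ∈ Set.Ioi c, f y = ∑ i, Ξ i * Real.exp (-(y - c) / b i) / b i) (n : ℕ) :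
    ∫ y in Set.Ioi c, poissonWeight n (a / y) * f y
      = ∑ i, Ξ i / (n ! * b i ^ n) * a ^ n * Real.exp (c / b i)
          * extGamma (-(n : ℝ) + 1) (c / b i) (a / b i) := by
  have expand : ∀ y ∈ Set.Ioi c, poissonWeight n (a / y) * f y
      = ∑ i, Ξ i * (poissonWeight n (a / y) * (Real.exp (-(y - c) / b i) / b i)) := fun y hy => by
    rw [hf y hy, Finset.mul_sum]
    exact Finset.sum_congr rfl fun i _ => by ring
  have hint (i : ι) : IntegrableOn
      (fun y => Ξ i * (poissonWeight n (a / y) * (Real.exp (-(y - c) / b i) / b i))) (Set.Ioi c) :=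
    (integrable_poissonWeight_mul n ((integrableOn_exp_neg_sub_div_Ioi c c (hb i)).div_const _)
      (by fun_prop) (ae_restrict_Ioi_div_nonneg ha hc)).const_mul _
  rw [setIntegral_congr_fun measurableSet_Ioi expand, integral_finsetSum _ fun i _ => hint i]
  refine Finset.sum_congr rfl fun i _ => ?_
  rw [integral_const_mul, integral_poissonWeight_mul_exp (hb i) hc]
  ring

theorem energy_statistic_cdf_rayleigh_general {N : ℕ} (hN : 0 < N) (ha : 0 ≤ a) (hc : 0 ≤ c)
    (hb : ∀ i, 0 < b i)
    (hf : ∀ y ∈ Set.Ioi c, f y = ∑ i, Ξ i * Real.exp (-(y - c) / b i) / b i) :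
    ∫ y in Set.Ioi c, lowGamma N (a / y) / (N - 1)! * f y
      = (∫ y in Set.Ioi c, f y) - ∑ n ∈ Finset.range N, ∑ i,
          Ξ i / (n ! * b i ^ n) * a ^ n * Real.exp (c / b i)
            * extGamma (-(n : ℝ) + 1) (c / b i) (a / b i) := by
  rw [integral_lowGamma_div_factorial_mul hN (integrableOn_expMixture hb hf) (by fun_prop)
    (ae_restrict_Ioi_div_nonneg ha hc)]
  simp_rw [integral_poissonWeight_mul_expMixture ha hc hb hf]

end ExponentialMixture

/-- Special Case 1 (Rayleigh fading) of the paper's Theorem 1: if the conditioning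
variance has the mixture-of-shifted-exponentials density
`f y = ∑ i, Ξ i · exp (-(y - c)/bᵢ) / bᵢ` on `[c, ∞)` with `∫_c^∞ f = 1`, then for every
`x > 0` the unconditional CDF `∫_c^∞ γ(N, N x / (2 y)) / (N-1)! · f y dy` of the energy
test statistic equals the stated closed form. -/
theorem energy_statistic_cdf_rayleigh (N L : ℕ) (hN : 0 < N) (hL : 0 < L)
    (c : ℝ) (hc : 0 < c) (b : Fin L → ℝ) (hb : ∀ i, 0 < b i) (Ξ : Fin L → ℝ)
    (f : ℝ → ℝ)
    (hf : ∀ y, f y = ∑ i : Fin L, Ξ i * Real.exp (-(y - c) / b i) / b i)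
    (hf1 : (∫ y in Set.Ioi c, f y) = 1) :
    ∀ x : ℝ, 0 < x →
      (∫ y in Set.Ioi c, (lowGamma N ((N : ℝ) * x / (2 * y))
            / (Nat.factorial (N - 1) : ℝ)) * f y)
        = 1 - ∑ n ∈ Finset.range N, ∑ i : Fin L,
            (Ξ i / ((Nat.factorial n : ℝ) * (b i) ^ n))
              * ((N : ℝ) * x / 2) ^ n * Real.exp (c / b i)
              * extGamma (-(n : ℝ) + 1) (c / b i) ((N : ℝ) * x / (2 * b i)) := by
  intro x hx
  simpa only [div_div, hf1] using energy_statistic_cdf_rayleigh_general hN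
    (a := N * x / 2) (by positivity) hc.le hb fun y _ => hf y
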